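/- Let n ≥ 2 and let λ_0, …, λ_{n-1} be elements of a commutative ring. Consider the 2-form α = ∑_{i=0}^{n-1} λ_i dz^{2i} ∧ dz^{2i+1} in the exterior algebra on 2n generators dz^0, …, dz^{2n-1}. Then α^{n-1} = (n-1)! · ∑_{i=0}^{n-1} (∏_{j≠i} λ_j) · dz^0 ∧ dz^1 ∧ … ∧ (omit dz^{2i} and dz^{2i+1}) ∧ … ∧ dz^{2n-1}, and consequently Pf(α^{n-1}) = Pf(α)^{n-1}, where Pf(α^{n-1}) is defined as the Pfaffian of (1/(n-1)!) ∗ α^{n-1} and Pf(α) = ∏ λ_i. -/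

import Mathlib

open Finset

/-!
Each 2-form `dz²ⁱ ∧ dz²ⁱ⁺¹` is central in the exterior algebra and squares to zero, so `α` is a sum
of square-zero elements of a commutative ring. Expanding the `k`-th power of such a sum, only the
squarefree monomials survive, each with coefficient `k!`: the power is `k!` times the `k`-th
elementary symmetric polynomial. With `n` summands and `k = n - 1`, every surviving monomial omits
exactly one of them.
-/

section SquareZero

variable {S : Type*} [CommSemiring S]

theorem add_pow_succ_of_sq_eq_zero {a : S} (ha : a ^ 2 = 0) (b : S) (k : ℕ) :
    (a + b) ^ (k + 1) = b ^ (k + 1) + (k + 1) * (a * b ^ k) := by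
  induction k with
  | zero => simp [add_comm]
  | succ k ih =>
    calc (a + b) ^ (k + 1 + 1)
        = (b ^ (k + 1) + (k + 1) * (a * b ^ k)) * (a + b) := by rw [pow_succ, ih]
      _ = b ^ (k + 2) + (k + 2) * (a * b ^ (k + 1)) + (k + 1) * b ^ k * a ^ 2 := by ring
      _ = b ^ (k + 1 + 1) + ((k + 1 : ℕ) + 1) * (a * b ^ (k + 1)) := by
        rw [ha]; push_cast; ring

theorem multiset_sum_pow_of_sq_eq_zero {s : Multiset S} (hs : ∀ a ∈ s, a ^ 2 = 0) (k : ℕ) :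
    s.sum ^ k = k.factorial * s.esymm k := by
  induction s using Multiset.induction_on generalizing k with
  | empty => cases k <;> simp [Multiset.esymm, Multiset.powersetCard_zero_right]
  | cons a s ih =>
    rw [Multiset.forall_mem_cons] at hs
    cases k with
    | zero => simp [Multiset.esymm]
    | succ k =>
      have esymm_cons : (a ::ₘ s).esymm (k + 1) = s.esymm (k + 1) + a * s.esymm k := by
        simp [Multiset.esymm, Multiset.sum_map_mul_left]
      rw [Multiset.sum_cons, add_pow_succ_of_sq_eq_zero hs.1, ih hs.2, ih hs.2, esymm_cons,
        Nat.factorial_succ]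
      push_cast
      ring

end SquareZero

section Erase

variable {ι : Type*} [DecidableEq ι]

theorem powersetCard_card_sub_one {s : Finset ι} (hs : s.Nonempty) :
    s.powersetCard (#s - 1) = s.image s.erase := by
  ext t
  rw [mem_powersetCard, mem_image]
  constructor
  · rintro ⟨hts, ht⟩
    obtain ⟨i, hi, rfl⟩ : ∃ i ∉ t, insert i t = s :=
      exists_eq_insert_iff.2 ⟨hts, by have := hs.card_pos; omega⟩
    exact ⟨i, mem_insert_self i t, erase_insert hi⟩
  · rintro ⟨i, hi, rfl⟩
    exact ⟨erase_subset i s, card_erase_of_mem hi⟩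

theorem prod_prod_erase {M : Type*} [CommMonoid M] (s : Finset ι) (f : ι → M) :
    ∏ i ∈ s, ∏ j ∈ s.erase i, f j = (∏ i ∈ s, f i) ^ (#s - 1) := by
  calc ∏ i ∈ s, ∏ j ∈ s.erase i, f j
      = ∏ j ∈ s, ∏ _i ∈ s.erase j, f j :=
        prod_comm' fun i j => by simp only [mem_erase]; tauto
    _ = ∏ j ∈ s, f j ^ (#s - 1) :=
        prod_congr rfl fun j hj => by rw [prod_const, card_erase_of_mem hj]
    _ = (∏ i ∈ s, f i) ^ (#s - 1) := prod_pow s _ f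

theorem sum_smul_pow_card_sub_one {R A : Type*} [CommSemiring R] [CommSemiring A] [Algebra R A]
    {s : Finset ι} (hs : s.Nonempty) (l : ι → R) {w : ι → A} (hw : ∀ i ∈ s, w i ^ 2 = 0) :
    (∑ i ∈ s, l i • w i) ^ (#s - 1) =
      ((#s - 1).factorial : R) • ∑ i ∈ s, (∏ j ∈ s.erase i, l j) • ∏ j ∈ s.erase i, w j := by
  have sq_eq_zero : ∀ a ∈ s.val.map fun i => l i • w i, a ^ 2 = 0 := by
    simp only [Multiset.mem_map, mem_val]
    rintro _ ⟨i, hi, rfl⟩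
    rw [smul_pow, hw i hi, smul_zero]
  calc (∑ i ∈ s, l i • w i) ^ (#s - 1)
      = ((#s - 1).factorial : A) * ∑ t ∈ s.powersetCard (#s - 1), ∏ j ∈ t, l j • w j := by
        rw [← esymm_map_val]
        exact multiset_sum_pow_of_sq_eq_zero sq_eq_zero _
    _ = ((#s - 1).factorial : R) • ∑ i ∈ s, ∏ j ∈ s.erase i, l j • w j := by
        rw [powersetCard_card_sub_one hs, sum_image s.erase_injOn, ← nsmul_eq_mul,
          Nat.cast_smul_eq_nsmul]
    _ = _ := by simp only [prod_smul]

end Erase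

section CentralElements

variable {n : ℕ}

theorem prod_map_filter_ne_finRange {M : Type*} [CommMonoid M] (f : Fin n → M) (i : Fin n) :
    (((List.finRange n).filter (· ≠ i)).map f).prod = ∏ j ∈ univ.erase i, f j := by
  have toFinset_eq : ((List.finRange n).filter (· ≠ i)).toFinset = univ.erase i := by
    ext; simp
  rw [← toFinset_eq, List.prod_toFinset _ ((List.nodup_finRange n).filter _)]

theorem sum_smul_pow_sub_one_of_mem_center {R A : Type*} [CommSemiring R] [Semiring A]
    [Algebra R A] (hn : n ≠ 0) (l : Fin n → R) {w : Fin n → A}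
    (hc : ∀ i, w i ∈ Subalgebra.center R A) (hw : ∀ i, w i ^ 2 = 0) :
    (∑ i, l i • w i) ^ (n - 1) = ((n - 1).factorial : R) •
      ∑ i, (∏ j ∈ univ.erase i, l j) • (((List.finRange n).filter (· ≠ i)).map w).prod := by
  let W (i : Fin n) : Subalgebra.center R A := ⟨w i, hc i⟩
  have coe_prod_erase (i : Fin n) : ((∏ j ∈ univ.erase i, W j : Subalgebra.center R A) : A) =
      (((List.finRange n).filter (· ≠ i)).map w).prod := by
    rw [← prod_map_filter_ne_finRange, ← Subalgebra.val_apply, map_list_prod, List.map_map]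
    rfl
  have : NeZero n := ⟨hn⟩
  have expansion := sum_smul_pow_card_sub_one univ_nonempty l
    (w := W) fun i _ => Subtype.ext (hw i)
  simpa [W, coe_prod_erase] using congrArg (Subalgebra.center R A).val expansion

end CentralElements

section Exterior

open ExteriorAlgebra (ι)

variable {R M : Type*} [CommRing R] [AddCommGroup M] [Module R M]

theorem ι_mul_ι_mem_center (x y : M) :
    ι R x * ι R y ∈ Subalgebra.center R (ExteriorAlgebra R M) := by
  have ι_anticomm (u v : M) : ι R u * ι R v = -(ι R v * ι R u) :=
    eq_neg_of_add_eq_zero_left (ExteriorAlgebra.ι_add_mul_swap u v)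
  rw [Subalgebra.mem_center_iff]
  intro b
  induction b using ExteriorAlgebra.induction with
  | algebraMap r => exact Algebra.commutes r _
  | ι z =>
    rw [← mul_assoc, ι_anticomm z x, neg_mul, mul_assoc, ι_anticomm z y, mul_neg, neg_neg,
      mul_assoc]
  | mul a b ha hb => rw [mul_assoc, hb, ← mul_assoc, ha, mul_assoc]
  | add a b ha hb => rw [add_mul, mul_add, ha, hb]

theorem ι_mul_ι_sq_eq_zero (x y : M) : (ι R x * ι R y) ^ 2 = 0 := by
  have central := Subalgebra.mem_center_iff.1 (ι_mul_ι_mem_center (R := R) x y)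
  rw [pow_two, mul_assoc, central, ← mul_assoc, ← mul_assoc, ExteriorAlgebra.ι_sq_zero]
  simp only [zero_mul]

end Exterior

section IndexPairs

variable {n : ℕ}

theorem two_mul_val_lt (i : Fin n) : 2 * (i : ℕ) < 2 * n := by omega

theorem two_mul_val_add_one_lt (i : Fin n) : 2 * (i : ℕ) + 1 < 2 * n := by omega

/-- The position `2i` of the first coordinate of the `i`-th pair in `0, …, 2n - 1`. -/
def evenIndex (i : Fin n) : Fin (2 * n) := ⟨2 * i, two_mul_val_lt i⟩

/-- The position `2i + 1` of the second coordinate of the `i`-th pair in `0, …, 2n - 1`. -/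
def oddIndex (i : Fin n) : Fin (2 * n) := ⟨2 * i + 1, two_mul_val_add_one_lt i⟩

theorem finRange_two_mul :
    List.finRange (2 * n) = (List.finRange n).flatMap fun k => [evenIndex k, oddIndex k] := by
  rw [← List.ofFn_id, List.ofFn_mul', List.flatMap_def, ← List.ofFn_eq_map]
  simp [List.ofFn_succ, evenIndex, oddIndex]

theorem filter_pair_ne (i k : Fin n) :
    [evenIndex k, oddIndex k].filter (fun m => m ≠ evenIndex i ∧ m ≠ oddIndex i) =
      if k = i then [] else [evenIndex k, oddIndex k] := by
  split_ifs with hki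
  · simp [hki]
  · have hki' : (k : ℕ) ≠ i := Fin.val_ne_of_ne hki
    have odd_ne_even : 2 * (k : ℕ) + 1 ≠ 2 * i := by omega
    have even_ne_odd : 2 * (k : ℕ) ≠ 2 * i + 1 := by omega
    simp [evenIndex, oddIndex, hki', odd_ne_even, even_ne_odd]

theorem prod_map_filter_finRange_two_mul {A : Type*} [Monoid A] (f : Fin (2 * n) → A)
    (i : Fin n) :
    (((List.finRange (2 * n)).filter fun k => k ≠ evenIndex i ∧ k ≠ oddIndex i).map f).prod =
      (((List.finRange n).filter (· ≠ i)).map fun k => f (evenIndex k) * f (oddIndex k)).prod := by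
  rw [finRange_two_mul, List.filter_flatMap]
  simp only [filter_pair_ne]
  induction List.finRange n with
  | nil => rfl
  | cons k L ih =>
    rw [List.flatMap_cons, List.map_append, List.prod_append, ih]
    by_cases hki : k = i <;> simp [hki]

end IndexPairs

theorem stmt_12_general {R M : Type*} [CommRing R] [AddCommGroup M] [Module R M]
    (n : ℕ) (hn : n ≠ 0) (l : Fin n → R) (v : Fin (2 * n) → M)
    (dz : Fin (2 * n) → ExteriorAlgebra R M) (hdz : ∀ k, dz k = ExteriorAlgebra.ι R (v k))
    (α : ExteriorAlgebra R M)
    (hα : α = ∑ i : Fin n, l i • (dz (evenIndex i) * dz (oddIndex i))) :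
    α ^ (n - 1)
      = (Nat.factorial (n - 1) : R) •
          ∑ i : Fin n, (∏ j ∈ Finset.univ.erase i, l j) •
            (((List.finRange (2 * n)).filter
                (fun k => k ≠ evenIndex i ∧ k ≠ oddIndex i)).map dz).prod
    ∧ ∏ i : Fin n, (∏ j ∈ Finset.univ.erase i, l j) = (∏ i, l i) ^ (n - 1) := by
  subst hα
  obtain rfl : dz = fun k => ExteriorAlgebra.ι R (v k) := funext hdz
  constructor
  · simp only [prod_map_filter_finRange_two_mul]
    exact sum_smul_pow_sub_one_of_mem_center hn l (fun _ => ι_mul_ι_mem_center _ _)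
      fun _ => ι_mul_ι_sq_eq_zero _ _
  · simpa using prod_prod_erase univ l

theorem stmt_12 {R : Type*} [CommRing R] (n : ℕ) (hn : 2 ≤ n) (l : Fin n → R)
    (dz : Fin (2 * n) → ExteriorAlgebra R (Fin (2 * n) → R))
    (hdz : ∀ k, dz k = ExteriorAlgebra.ι R (Pi.single k (1 : R)))
    (α : ExteriorAlgebra R (Fin (2 * n) → R))
    (hα : α = ∑ i : Fin n,
      l i • (dz ⟨2 * i, by omega⟩ * dz ⟨2 * i + 1, by omega⟩)) :
    α ^ (n - 1)
      = (Nat.factorial (n - 1) : R) •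
          ∑ i : Fin n, (∏ j ∈ Finset.univ.erase i, l j) •
            (((List.finRange (2 * n)).filter
                (fun k => k ≠ (⟨2 * i, by omega⟩ : Fin (2 * n)) ∧
                          k ≠ (⟨2 * i + 1, by omega⟩ : Fin (2 * n)))).map dz).prod
    ∧ ∏ i : Fin n, (∏ j ∈ Finset.univ.erase i, l j) = (∏ i, l i) ^ (n - 1) :=
  stmt_12_general n (by omega) l (fun k => Pi.single k 1) dz hdz α hα
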